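/- arXiv:2312.05416 — 7 statements merged into one kernel-verified Lean document; each statement's English description precedes it below -/
import Mathlib

section
/- In the free-block placement model, every valid placement on m machines satisfies the inequality m·k ≥ Σ_j d_j · min_{1≤i≤k} ( i / min(f_j(i), d_j) ), where the sum is over all n jobs and the inequality is between real numbers. -/
/-- A placement of `n` jobs on `m` machines, each with `k` processors.
`P t` is the multiset of blocks on machine `t`; a block is a pair
(block size, job). The placement is valid if block sizes lie in `{1,…,k}`,
the block sizes on each machine sum to at most `k`, and every job `j`'s
demand `d j` is satisfied: the sum of `f j i` over all blocks `(i, j)`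
assigned to `j` across all machines is at least `d j`. -/
def ValidPlacement (n k : ℕ) (d : Fin n → ℕ) (f : Fin n → ℕ → ℕ)
    (m : ℕ) (P : Fin m → Multiset (ℕ × Fin n)) : Prop :=
  (∀ t, ∀ b ∈ P t, 1 ≤ b.1 ∧ b.1 ≤ k) ∧
  (∀ t, ((P t).map Prod.fst).sum ≤ k) ∧
  (∀ j : Fin n,
    d j ≤ ∑ t, (((P t).filter (fun b => b.2 = j)).map (fun b => f j b.1)).sum)

/-!
Pool the blocks of all machines and truncate the supply `g` of each block at the demand `c` of its
job. Truncation is subadditive, so the truncated supplies still cover the demand. With `r` the least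
ratio `w / min g c` over block sizes `w`, every block satisfies `r * min g c ≤ w`. Summing over the
blocks of one job gives `c * r ≤ ∑ w`, and summing over the jobs bounds `∑ c * r` by the total block
size, which is at most `m * k`.
-/

section Truncation

variable {M : Type*} [AddCommMonoid M] [LinearOrder M] [IsOrderedAddMonoid M]

theorem min_add_le_min_add_min {a b c : M} (ha : 0 ≤ a) (hb : 0 ≤ b) (hc : 0 ≤ c) :
    min (a + b) c ≤ min a c + min b c := by
  rcases le_total a c with hac | hca
  · rcases le_total b c with hbc | hcb
    · simp [min_eq_left hac, min_eq_left hbc]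
    · simp [min_eq_left hac, min_eq_right hcb, le_add_of_nonneg_left ha]
  · simp [min_eq_right hca, le_add_of_nonneg_right (le_min hb hc)]

theorem min_sum_le_sum_map_min {c : M} (hc : 0 ≤ c) {s : Multiset M} (hs : ∀ a ∈ s, 0 ≤ a) :
    min s.sum c ≤ (s.map (min · c)).sum :=
  Multiset.le_sum_of_subadditive_on_pred (min · c) (0 ≤ ·) (min_le_left 0 c) le_rfl
    (fun _ _ ha hb => min_add_le_min_add_min ha hb hc) (fun _ _ => add_nonneg) s hs

end Truncation

section MultisetSums

variable {α ι M : Type*} [AddCommMonoid M]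

theorem sum_map_filter_eq_sum_map_ite (p : α → Prop) [DecidablePred p] (g : α → M)
    (s : Multiset α) :
    ((s.filter p).map g).sum = (s.map fun a => if p a then g a else 0).sum := by
  induction s using Multiset.induction_on with
  | empty => simp
  | cons a s ih => by_cases ha : p a <;> simp [ha, ih]

theorem sum_fiberwise_sum_map [Fintype ι] [DecidableEq ι] (job : α → ι) (g : α → M)
    (s : Multiset α) :
    ∑ j, ((s.filter (job · = j)).map g).sum = (s.map g).sum := by
  simp only [sum_map_filter_eq_sum_map_ite, ← Multiset.sum_map_sum, Finset.sum_ite_eq,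
    Finset.mem_univ, if_true]

theorem sum_map_finsetSum (t : Finset ι) (P : ι → Multiset α) (g : α → M) :
    ((∑ i ∈ t, P i).map g).sum = ∑ i ∈ t, ((P i).map g).sum :=
  map_sum (Multiset.sumAddMonoidHom.comp (Multiset.mapAddMonoidHom g)) P t

end MultisetSums

section CoveringBound

variable {α ι R : Type*} [CommSemiring R] [LinearOrder R] [IsOrderedRing R]
  {s : Multiset α} {supply size : α → R}

theorem mul_le_sum_map_of_mul_min_le {c r : R} (hc : 0 ≤ c) (hr : 0 ≤ r)
    (hsupply : ∀ a ∈ s, 0 ≤ supply a) (hcover : c ≤ (s.map supply).sum)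
    (hrate : ∀ a ∈ s, r * min (supply a) c ≤ size a) :
    c * r ≤ (s.map size).sum := by
  have htrunc : c ≤ (s.map fun a => min (supply a) c).sum := by
    simpa [hcover] using min_sum_le_sum_map_min hc (s := s.map supply) (by simpa using hsupply)
  calc c * r = r * c := mul_comm c r
    _ ≤ r * (s.map fun a => min (supply a) c).sum := by gcongr
    _ = (s.map fun a => r * min (supply a) c).sum := Multiset.sum_map_mul_left.symm
    _ ≤ (s.map size).sum := Multiset.sum_map_le_sum_map _ _ hrate

theorem sum_mul_le_sum_map_of_mul_min_le [Fintype ι] [DecidableEq ι] (job : α → ι) {c r : ι → R}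
    (hc : ∀ j, 0 ≤ c j) (hr : ∀ j, 0 ≤ r j) (hsupply : ∀ a ∈ s, 0 ≤ supply a)
    (hcover : ∀ j, c j ≤ ((s.filter (job · = j)).map supply).sum)
    (hrate : ∀ a ∈ s, r (job a) * min (supply a) (c (job a)) ≤ size a) :
    ∑ j, c j * r j ≤ (s.map size).sum := by
  rw [← sum_fiberwise_sum_map job]
  refine Finset.sum_le_sum fun j _ => mul_le_sum_map_of_mul_min_le (hc j) (hr j)
    (fun a ha => hsupply a (Multiset.mem_of_mem_filter ha)) (hcover j) fun a ha => ?_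
  obtain ⟨has, rfl⟩ := Multiset.mem_filter.mp ha
  exact hrate a has

end CoveringBound

theorem inf'_div_mul_le {ι K : Type*} [Semifield K] [LinearOrder K] [IsStrictOrderedRing K]
    {s : Finset ι} (w g : ι → K) {i : ι} (hi : i ∈ s) (hg : 0 < g i) :
    s.inf' ⟨i, hi⟩ (fun i => w i / g i) * g i ≤ w i :=
  (le_div_iff₀ hg).mp (Finset.inf'_le _ hi)

namespace ValidPlacement

variable {n k m : ℕ} {d : Fin n → ℕ} {f : Fin n → ℕ → ℕ} {P : Fin m → Multiset (ℕ × Fin n)}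

theorem size_mem_Icc (hP : ValidPlacement n k d f m P) {b : ℕ × Fin n} (hb : b ∈ ∑ t, P t) :
    b.1 ∈ Finset.Icc 1 k := by
  obtain ⟨t, -, hbt⟩ := Multiset.mem_sum.mp hb
  exact Finset.mem_Icc.mpr (hP.1 t b hbt)

theorem sum_size_le (hP : ValidPlacement n k d f m P) :
    ((∑ t, P t).map Prod.fst).sum ≤ m * k := by
  rw [sum_map_finsetSum]
  simpa using Finset.sum_le_card_nsmul Finset.univ _ k fun t _ => hP.2.1 t

theorem demand_le (hP : ValidPlacement n k d f m P) (j : Fin n) :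
    d j ≤ (((∑ t, P t).filter (·.2 = j)).map fun b => f b.2 b.1).sum := by
  calc d j ≤ ∑ t, (((P t).filter (·.2 = j)).map fun b => f j b.1).sum := hP.2.2 j
    _ = (((∑ t, P t).filter (·.2 = j)).map fun b => f j b.1).sum := by
      simp only [sum_map_filter_eq_sum_map_ite, sum_map_finsetSum]
    _ = (((∑ t, P t).filter (·.2 = j)).map fun b => f b.2 b.1).sum := by
      refine congrArg _ (Multiset.map_congr rfl fun b hb => ?_)
      rw [(Multiset.mem_filter.mp hb).2]

end ValidPlacement

/-- In the free-block model, every valid placement on `m` machines satisfies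
`m·k ≥ Σ_j d_j · min_{1≤i≤k} ( i / min(f_j(i), d_j) )` over the reals. -/
theorem stmt_2 (n k : ℕ) (hk : 1 ≤ k)
    (d : Fin n → ℕ) (hd : ∀ j, 1 ≤ d j)
    (f : Fin n → ℕ → ℕ) (hf : ∀ j, ∀ i ∈ Finset.Icc 1 k, 1 ≤ f j i)
    (m : ℕ) (P : Fin m → Multiset (ℕ × Fin n))
    (hP : ValidPlacement n k d f m P) :
    ∑ j, (d j : ℝ) *
        (Finset.Icc 1 k).inf' ⟨1, Finset.mem_Icc.mpr ⟨le_refl 1, hk⟩⟩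
          (fun i => (i : ℝ) / (min (f j i) (d j) : ℕ))
      ≤ (m : ℝ) * k := by
  have hrate_nonneg : ∀ j, 0 ≤ (Finset.Icc 1 k).inf' ⟨1, Finset.mem_Icc.mpr ⟨le_refl 1, hk⟩⟩
      (fun i => (i : ℝ) / (min (f j i) (d j) : ℕ)) :=
    fun j => Finset.le_inf' _ _ fun i _ => by positivity
  have hcover : ∀ j, (d j : ℝ) ≤
      (((∑ t, P t).filter (·.2 = j)).map fun b => (f b.2 b.1 : ℝ)).sum := fun j => by
    simpa [Nat.cast_multiset_sum] using Nat.cast_le (α := ℝ).mpr (hP.demand_le j)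
  calc _ ≤ ((∑ t, P t).map fun b => (b.1 : ℝ)).sum := by
        refine sum_mul_le_sum_map_of_mul_min_le Prod.snd (fun j => Nat.cast_nonneg _) hrate_nonneg
          (fun b _ => Nat.cast_nonneg _) hcover fun b hb => ?_
        have hsize := hP.size_mem_Icc hb
        rw [← Nat.cast_min]
        exact inf'_div_mul_le (fun i : ℕ => (i : ℝ)) (fun i => ((min (f b.2 i) (d b.2) : ℕ) : ℝ))
          hsize (Nat.cast_pos.mpr (lt_min (hf b.2 _ hsize) (hd b.2)))
    _ = (((∑ t, P t).map Prod.fst).sum : ℕ) := by simp [Nat.cast_multiset_sum]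
    _ ≤ (m : ℝ) * k := by exact_mod_cast hP.sum_size_le
end

section
/- Let k ≥ 1 be an integer, let f : {1,…,k} → ℕ satisfy f(i) ≥ 1 for all i, and let α ∈ {1,…,k} be a densest block size, i.e., f(α)/α ≥ f(i)/i for all i ∈ {1,…,k}. Let d ≥ 1 be an integer that is a multiple of f(α). Then the minimum of Σ_{i∈S} i, taken over all finite multisets S of elements of {1,…,k} satisfying Σ_{i∈S} f(i) ≥ d, equals α·d/f(α). -/
theorem mul_le_mul_of_natCast_div_le_natCast_div {K : Type*} [Semifield K] [LinearOrder K]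
    [IsStrictOrderedRing K] {a b c d : ℕ} (hb : 0 < b) (hd : 0 < d)
    (h : (a : K) / b ≤ (c : K) / d) : a * d ≤ c * b := by
  rw [div_le_div_iff₀ (Nat.cast_pos.mpr hb) (Nat.cast_pos.mpr hd)] at h
  exact_mod_cast h

section BlockSizes

variable {ι R : Type*}

theorem sum_map_mul_le_mul_sum_map [NonUnitalNonAssocSemiring R] [PartialOrder R]
    [IsOrderedAddMonoid R] {f g : ι → R} {a c : R} {S : Multiset ι}
    (h : ∀ i ∈ S, f i * a ≤ c * g i) :
    (S.map f).sum * a ≤ c * (S.map g).sum := by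
  rw [← Multiset.sum_map_mul_right, ← Multiset.sum_map_mul_left]
  exact Multiset.sum_map_le_sum_map _ _ h

variable [Semiring R] [LinearOrder R] [IsStrictOrderedRing R] {size gain : ι → R} {α : ι}

theorem nsmul_size_le_sum_size_of_nsmul_gain_le_sum_gain {S : Multiset ι}
    (hsize : 0 ≤ size α) (hgain : 0 < gain α)
    (hdense : ∀ i ∈ S, gain i * size α ≤ gain α * size i) {n : ℕ}
    (hS : n • gain α ≤ (S.map gain).sum) : n • size α ≤ (S.map size).sum := by
  refine le_of_mul_le_mul_left ?_ hgain
  calc gain α * n • size α = n • gain α * size α := by rw [mul_smul_comm, smul_mul_assoc]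
    _ ≤ (S.map gain).sum * size α := mul_le_mul_of_nonneg_right hS hsize
    _ ≤ gain α * (S.map size).sum := sum_map_mul_le_mul_sum_map hdense

-- `hdense` is `gain i / size i ≤ gain α / size α`, cross-multiplied so that it makes sense in a
-- semiring and for blocks of size zero.
theorem stmt_3_general {A : Set ι} (hα : α ∈ A) (hsize : 0 ≤ size α) (hgain : 0 < gain α)
    (hdense : ∀ i ∈ A, gain i * size α ≤ gain α * size i) (n : ℕ) :
    IsLeast {s : R | ∃ S : Multiset ι,
        (∀ i ∈ S, i ∈ A) ∧ n • gain α ≤ (S.map gain).sum ∧ s = (S.map size).sum}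
      (n • size α) := by
  constructor
  · refine ⟨Multiset.replicate n α, fun i hi => ?_, ?_, ?_⟩
    · rwa [Multiset.eq_of_mem_replicate hi]
    · rw [Multiset.map_replicate, Multiset.sum_replicate]
    · rw [Multiset.map_replicate, Multiset.sum_replicate]
  · rintro _ ⟨S, hSA, hS, rfl⟩
    exact nsmul_size_le_sum_size_of_nsmul_gain_le_sum_gain hsize hgain
      (fun i hi => hdense i (hSA i hi)) hS

end BlockSizes

/-- If `α ∈ {1,…,k}` is a densest block size (`f α / α ≥ f i / i` for all `i`)
and `d ≥ 1` is a multiple of `f α`, then the minimum of `Σ_{i∈S} i` over all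
finite multisets `S` of elements of `{1,…,k}` with `Σ_{i∈S} f i ≥ d`
equals `α · (d / f α)`. -/
theorem stmt_3 (k : ℕ) (hk : 1 ≤ k)
    (f : ℕ → ℕ) (hf : ∀ i ∈ Finset.Icc 1 k, 1 ≤ f i)
    (α : ℕ) (hα : α ∈ Finset.Icc 1 k)
    (hdense : ∀ i ∈ Finset.Icc 1 k, (f i : ℝ) / (i : ℝ) ≤ (f α : ℝ) / (α : ℝ))
    (d : ℕ) (hd : 1 ≤ d) (hdiv : f α ∣ d) :
    IsLeast {s : ℕ | ∃ S : Multiset ℕ,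
        (∀ i ∈ S, i ∈ Finset.Icc 1 k) ∧ d ≤ (S.map f).sum ∧ s = S.sum}
      (α * (d / f α)) := by
  have hcross : ∀ i ∈ Finset.Icc 1 k, f i * α ≤ f α * i := fun i hi =>
    mul_le_mul_of_natCast_div_le_natCast_div (Finset.mem_Icc.mp hi).1 (Finset.mem_Icc.mp hα).1
      (hdense i hi)
  simpa [mul_comm α, Nat.div_mul_cancel hdiv] using
    stmt_3_general (size := id) (A := Finset.Icc 1 k) hα (Nat.zero_le α) (hf α hα) hcross (d / f α)
end

section
/- Let k ≥ 1 be an integer, and for j = 1,…,n let α_j ∈ {1,…,k} and let d_j, f_j be integers with d_j ≥ f_j ≥ 1. Then the finite multiset consisting, for each j, of ⌈d_j/f_j⌉ copies of α_j can be partitioned into m sub-multisets each of sum at most k, with m ≤ 1 + (4/k)·Σ_{j=1}^n α_j·(d_j/f_j) (an inequality of real numbers). -/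
/-!
Pack greedily, keeping one bin open. When an item no longer fits, it and the open bin together
exceed the capacity `k`, so the larger of the two is more than half full: close that one and keep
the other open. All bins but the open one are then more than half full, so at most `1 + 2 L / k`
bins are used for a total load `L`. Finally `⌈d / f⌉ ≤ d / f + 1 ≤ 2 d / f` bounds the load.
-/

section BinPacking

variable {M : Type*} [AddCommMonoid M] {k : M} {s p : Multiset M} {bins : Multiset (Multiset M)}

/-- A packing of a multiset `s` of item sizes into bins of capacity `k`. A bin is the multiset of
the sizes it holds, so equal items are not distinguished and empty bins are allowed (and counted).
-/
structure IsBinPacking [LE M] (k : M) (s : Multiset M) (bins : Multiset (Multiset M)) :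
    Prop where
  sum_eq : bins.sum = s
  sum_le : ∀ p ∈ bins, p.sum ≤ k

lemma IsBinPacking.cons [LE M] (hp : p.sum ≤ k) (h : IsBinPacking k s bins) :
    IsBinPacking k (p + s) (p ::ₘ bins) where
  sum_eq := by rw [Multiset.sum_cons, h.sum_eq]
  sum_le := Multiset.forall_mem_cons.2 ⟨hp, h.sum_le⟩

lemma card_nsmul_le_nsmul_sum_sum [Preorder M] [IsOrderedAddMonoid M] {c : ℕ}
    (h : ∀ q ∈ bins, k ≤ c • q.sum) : bins.card • k ≤ c • bins.sum.sum := by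
  calc bins.card • k = (bins.map fun q ↦ c • q.sum).card • k := by rw [Multiset.card_map]
    _ ≤ (bins.map fun q ↦ c • q.sum).sum :=
      Multiset.card_nsmul_le_sum (by simpa only [Multiset.forall_mem_map_iff] using h)
    _ = c • bins.sum.sum := by
      rw [Multiset.sum_map_nsmul, ← Multiset.sum_join, Multiset.join]

variable [LinearOrder M] [IsOrderedAddMonoid M]

lemma exists_isBinPacking_cons_lt_two_nsmul_sum (hk : 0 ≤ k) (hs : ∀ a ∈ s, a ≤ k) :
    ∃ p bins, IsBinPacking k s (p ::ₘ bins) ∧ ∀ q ∈ bins, k < 2 • q.sum := by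
  induction s using Multiset.induction_on with
  | empty => exact ⟨0, 0, ⟨by simp, by simpa using hk⟩, by simp⟩
  | cons a s ih =>
    obtain ⟨ha, hs⟩ := Multiset.forall_mem_cons.1 hs
    obtain ⟨p, bins, hpack, hfull⟩ := ih hs
    have hbins := (Multiset.forall_mem_cons.1 hpack.sum_le).2
    rcases le_or_gt (a + p.sum) k with hfit | hover
    · refine ⟨a ::ₘ p, bins, ⟨?_, ?_⟩, hfull⟩
      · rw [Multiset.sum_cons, Multiset.cons_add, ← Multiset.sum_cons, hpack.sum_eq]
      · exact Multiset.forall_mem_cons.2 ⟨by rwa [Multiset.sum_cons], hbins⟩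
    · have hpack' : IsBinPacking k (a ::ₘ s) ({a} ::ₘ p ::ₘ bins) :=
        Multiset.singleton_add a s ▸ hpack.cons ((Multiset.sum_singleton a).trans_le ha)
      rcases le_total a p.sum with hle | hle
      · refine ⟨{a}, p ::ₘ bins, hpack', Multiset.forall_mem_cons.2 ⟨?_, hfull⟩⟩
        calc k < a + p.sum := hover
          _ ≤ p.sum + p.sum := by gcongr
          _ = 2 • p.sum := (two_nsmul _).symm
      · refine ⟨p, {a} ::ₘ bins, Multiset.cons_swap {a} p bins ▸ hpack',
          Multiset.forall_mem_cons.2 ⟨?_, hfull⟩⟩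
        calc k < a + p.sum := hover
          _ ≤ a + a := by gcongr
          _ = 2 • ({a} : Multiset M).sum := by rw [Multiset.sum_singleton, two_nsmul]

lemma exists_isBinPacking_card_nsmul_le (hk : 0 ≤ k) (hs₀ : ∀ a ∈ s, 0 ≤ a)
    (hs : ∀ a ∈ s, a ≤ k) : ∃ bins, IsBinPacking k s bins ∧ bins.card • k ≤ k + 2 • s.sum := by
  obtain ⟨p, bins, hpack, hfull⟩ := exists_isBinPacking_cons_lt_two_nsmul_sum hk hs
  have hsum : p + bins.sum = s := by rw [← Multiset.sum_cons, hpack.sum_eq]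
  have hp : 0 ≤ p.sum :=
    Multiset.sum_nonneg fun a ha ↦ hs₀ a (hsum ▸ Multiset.mem_add.2 (Or.inl ha))
  refine ⟨p ::ₘ bins, hpack, ?_⟩
  calc (p ::ₘ bins).card • k = k + bins.card • k := by rw [Multiset.card_cons, succ_nsmul']
    _ ≤ k + 2 • bins.sum.sum := by
      gcongr k + ?_
      exact card_nsmul_le_nsmul_sum_sum fun q hq ↦ (hfull q hq).le
    _ ≤ k + 2 • s.sum := by
      gcongr
      rw [← hsum, Multiset.sum_add]
      exact le_add_of_nonneg_left hp

end BinPacking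

section CeilDiv

variable {K : Type*} [Field K] [LinearOrder K] [IsStrictOrderedRing K]

lemma ceilDiv_mul_lt_add (d : ℕ) {f : ℕ} (hf : 0 < f) : (d ⌈/⌉ f) * f < d + f := by
  rw [Nat.ceilDiv_eq_add_pred_div]
  have := Nat.div_mul_le_self (d + f - 1) f
  lia

lemma cast_ceilDiv_lt_div_add_one (d : ℕ) {f : ℕ} (hf : 0 < f) :
    ((d ⌈/⌉ f : ℕ) : K) < d / f + 1 := by
  have hf' : (0 : K) < f := mod_cast hf
  rw [div_add_one hf'.ne', lt_div_iff₀ hf']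
  exact_mod_cast ceilDiv_mul_lt_add d hf

lemma cast_ceilDiv_le_two_mul_div {d f : ℕ} (hf : 0 < f) (hfd : f ≤ d) :
    ((d ⌈/⌉ f : ℕ) : K) ≤ 2 * (d / f) := by
  have hdiv : (1 : K) ≤ d / f := (one_le_div₀ (mod_cast hf)).2 (mod_cast hfd)
  linarith [cast_ceilDiv_lt_div_add_one (K := K) d hf]

lemma cast_sum_sum_replicate_ceilDiv_le {ι : Type*} (s : Finset ι) (α : ι → ℕ) {d f : ι → ℕ}
    (hf : ∀ j ∈ s, 0 < f j) (hfd : ∀ j ∈ s, f j ≤ d j) :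
    (((∑ j ∈ s, Multiset.replicate (d j ⌈/⌉ f j) (α j)).sum : ℕ) : K) ≤
      2 * ∑ j ∈ s, (α j : K) * (d j / f j) := by
  rw [Multiset.sum_sum, Nat.cast_sum, Finset.mul_sum]
  refine Finset.sum_le_sum fun j hj ↦ ?_
  rw [Multiset.sum_replicate, smul_eq_mul, Nat.cast_mul]
  calc ((d j ⌈/⌉ f j : ℕ) : K) * α j ≤ 2 * (d j / f j) * α j := by
        gcongr
        exact cast_ceilDiv_le_two_mul_div (hf j hj) (hfd j hj)
    _ = 2 * (α j * (d j / f j)) := by ring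

end CeilDiv

/-- The multiset consisting, for each job `j`, of `⌈d j / f j⌉` copies of its
densest block size `α j ∈ {1,…,k}` (with `d j ≥ f j ≥ 1`) can be partitioned
into `m` sub-multisets each of sum at most `k`, with
`m ≤ 1 + (4/k)·Σ_j α_j·(d_j/f_j)` as real numbers. -/
theorem stmt_5 (k : ℕ) (hk : 1 ≤ k) (n : ℕ)
    (α : Fin n → ℕ) (hα : ∀ j, α j ∈ Finset.Icc 1 k)
    (d f : Fin n → ℕ) (hf : ∀ j, 1 ≤ f j) (hdf : ∀ j, f j ≤ d j) :
    ∃ parts : Multiset (Multiset ℕ),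
      parts.sum = ∑ j, Multiset.replicate (d j ⌈/⌉ f j) (α j) ∧
      (∀ p ∈ parts, p.sum ≤ k) ∧
      (Multiset.card parts : ℝ) ≤
        1 + (4 / (k : ℝ)) * ∑ j, (α j : ℝ) * ((d j : ℝ) / (f j : ℝ)) := by
  have hsizes : ∀ a ∈ ∑ j, Multiset.replicate (d j ⌈/⌉ f j) (α j), a ≤ k := fun a ha ↦ by
    obtain ⟨j, -, hj⟩ := Multiset.mem_sum.1 ha
    exact Multiset.eq_of_mem_replicate hj ▸ (Finset.mem_Icc.1 (hα j)).2
  obtain ⟨parts, hpack, hcard⟩ :=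
    exists_isBinPacking_card_nsmul_le k.zero_le (fun a _ ↦ a.zero_le) hsizes
  refine ⟨parts, hpack.sum_eq, hpack.sum_le, ?_⟩
  have hk' : (0 : ℝ) < k := mod_cast hk
  have hload := cast_sum_sum_replicate_ceilDiv_le (K := ℝ) Finset.univ α
    (fun j _ ↦ hf j) fun j _ ↦ hdf j
  set L : ℕ := (∑ j, Multiset.replicate (d j ⌈/⌉ f j) (α j)).sum
  have hcard' : (parts.card : ℝ) * k ≤ k + 2 * L := mod_cast hcard
  calc (parts.card : ℝ) ≤ (k + 2 * L) / k := (le_div_iff₀ hk').2 hcard'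
    _ = 1 + 2 / k * L := by field_simp
    _ ≤ 1 + 2 / k * (2 * ∑ j, (α j : ℝ) * ((d j : ℝ) / (f j : ℝ))) := by gcongr
    _ = 1 + 4 / k * ∑ j, (α j : ℝ) * ((d j : ℝ) / (f j : ℝ)) := by ring
end

section
/- In the free-block placement model, if there exists a valid placement of all jobs on m machines, then there exists a valid placement of all jobs on at most 1 + 4m machines in which every job is executed only on blocks of a single size. -/
/-!
Pool the blocks of all machines. By averaging, some block used for a job is at least as dense
(demand satisfied per processor) as all the blocks of that job together. Repeating this block until
the demand is met takes no more processors than the original blocks, plus one last copy of a block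
that was itself among them: at most twice as many. The `2 m k` processors needed in total are
packed greedily into machines that, all but one of them, are more than half full.
-/

section Pooling

variable {α ι : Type*}

theorem filter_finset_sum (p : α → Prop) [DecidablePred p] (I : Finset ι) (P : ι → Multiset α) :
    (∑ t ∈ I, P t).filter p = ∑ t ∈ I, (P t).filter p :=
  map_sum (⟨⟨Multiset.filter p, Multiset.filter_zero p⟩, Multiset.filter_add p⟩ :
    Multiset α →+ Multiset α) P I

theorem sum_map_finset_sum {M : Type*} [AddCommMonoid M] (w : α → M) (I : Finset ι)
    (P : ι → Multiset α) :
    ((∑ t ∈ I, P t).map w).sum = ∑ t ∈ I, ((P t).map w).sum :=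
  map_sum (Multiset.sumAddMonoidHom.comp (Multiset.mapAddMonoidHom w)) P I

theorem finset_sum_filter_fiber_eq [Fintype ι] [DecidableEq ι] (g : α → ι) (A : Multiset α) :
    ∑ j, A.filter (fun a => g a = j) = A := by
  classical
  ext a
  simp only [Multiset.count_sum', Multiset.count_filter, Finset.sum_ite_eq, Finset.mem_univ,
    if_true]

theorem filter_fiber_finset_sum [Fintype ι] [DecidableEq ι] {g : α → ι} {B : ι → Multiset α}
    (hB : ∀ j, ∀ a ∈ B j, g a = j) (j : ι) :
    (∑ i, B i).filter (fun a => g a = j) = B j := by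
  rw [filter_finset_sum, Finset.sum_eq_single j]
  · exact Multiset.filter_eq_self.2 (hB j)
  · exact fun i _ hij => Multiset.filter_eq_nil.2 fun a ha haj => hij ((hB i a ha).symm.trans haj)
  · exact fun hj => absurd (Finset.mem_univ j) hj

end Pooling

section Density

theorem exists_nsmul_lt_le_succ_nsmul {M : Type*} [AddCommMonoid M] [LinearOrder M]
    [Archimedean M] {x d : M} (hx : 0 < x) (hd : 0 < d) :
    ∃ p : ℕ, p • x < d ∧ d ≤ (p + 1) • x := by
  classical
  have hex : ∃ p : ℕ, d ≤ (p + 1) • x := by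
    obtain ⟨_ | p, hp⟩ := Archimedean.arch d hx
    · exact absurd (zero_nsmul x ▸ hp) hd.not_ge
    · exact ⟨p, hp⟩
  refine ⟨Nat.find hex, ?_, Nat.find_spec hex⟩
  cases hfind : Nat.find hex with
  | zero => rwa [zero_nsmul]
  | succ p => exact not_le.1 (Nat.find_min hex (hfind ▸ p.lt_succ_self))

variable {α R : Type*} [CommSemiring R] [LinearOrder R] [IsStrictOrderedRing R]

theorem exists_sum_mul_le_mul_sum {A : Multiset α} (hA : A ≠ 0) (v w : α → R) :
    ∃ a ∈ A, (A.map v).sum * w a ≤ v a * (A.map w).sum := by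
  by_contra! h
  have hlt := Multiset.sum_lt_sum_of_nonempty hA h
  rw [Multiset.sum_map_mul_right, Multiset.sum_map_mul_left] at hlt
  exact lt_irrefl _ hlt

variable [Archimedean R]

theorem exists_subsingleton_cover {A : Multiset α} {v w : α → R} {d : R}
    (hw : ∀ a ∈ A, 0 < w a) (hd : d ≤ (A.map v).sum) :
    ∃ B ⊆ A, {a | a ∈ B}.Subsingleton ∧ d ≤ (B.map v).sum ∧
      (B.map w).sum ≤ 2 * (A.map w).sum := by
  set V := (A.map v).sum with hV
  set W := (A.map w).sum
  have hw0 : ∀ x ∈ A.map w, 0 ≤ x := Multiset.forall_mem_map_iff.2 fun a ha => (hw a ha).le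
  obtain hd0 | hd0 := le_or_gt d 0
  · exact ⟨0, by simp, by simp, by simpa using hd0,
      by simpa using mul_nonneg zero_le_two (Multiset.sum_nonneg hw0)⟩
  have hA : A ≠ 0 := by
    rintro rfl
    exact (hd0.trans_le hd).ne' (by simp [hV])
  obtain ⟨a, ha, hdense⟩ := exists_sum_mul_le_mul_sum hA v w
  have haW : w a ≤ W := Multiset.single_le_sum hw0 _ (Multiset.mem_map_of_mem w ha)
  have hva : 0 < v a :=
    pos_of_mul_pos_left ((mul_pos (hd0.trans_le hd) (hw a ha)).trans_le hdense)
      ((hw a ha).le.trans haW)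
  obtain ⟨p, hp, hp'⟩ := exists_nsmul_lt_le_succ_nsmul hva hd0
  have hpW : p • w a ≤ W := by
    refine le_of_mul_le_mul_left ?_ hva
    calc v a * p • w a = p • v a * w a := by rw [mul_smul_comm, smul_mul_assoc]
      _ ≤ V * w a := mul_le_mul_of_nonneg_right (hp.le.trans hd) (hw a ha).le
      _ ≤ v a * W := hdense
  refine ⟨Multiset.replicate (p + 1) a, fun b hb => Multiset.eq_of_mem_replicate hb ▸ ha,
    fun b hb c hc => (Multiset.eq_of_mem_replicate hb).trans (Multiset.eq_of_mem_replicate hc).symm,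
    ?_, ?_⟩
  · rwa [Multiset.map_replicate, Multiset.sum_replicate]
  · rw [Multiset.map_replicate, Multiset.sum_replicate, succ_nsmul, two_mul]
    exact add_le_add hpW haW

theorem exists_injOn_cover {ι : Type*} [Finite ι] [DecidableEq ι] (g : α → ι) {A : Multiset α}
    {v : ι → α → R} {w : α → R} {d : ι → R} (hw : ∀ a ∈ A, 0 < w a)
    (hd : ∀ j, d j ≤ ((A.filter fun a => g a = j).map (v j)).sum) :
    ∃ B ⊆ A, Set.InjOn g {a | a ∈ B} ∧
      (∀ j, d j ≤ ((B.filter fun a => g a = j).map (v j)).sum) ∧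
      (B.map w).sum ≤ 2 * (A.map w).sum := by
  cases nonempty_fintype ι
  choose B hBA hBsub hBd hBw using fun j =>
    exists_subsingleton_cover (fun a ha => hw a (Multiset.mem_of_mem_filter ha)) (hd j)
  have hBg : ∀ j, ∀ a ∈ B j, g a = j := fun j a ha => (Multiset.mem_filter.1 (hBA j ha)).2
  have hmem : ∀ a ∈ ∑ j, B j, a ∈ B (g a) := by
    intro a ha
    obtain ⟨j, -, haj⟩ := Multiset.mem_sum.1 ha
    rwa [hBg j a haj]
  refine ⟨∑ j, B j, fun a ha => Multiset.mem_of_mem_filter (hBA _ (hmem a ha)),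
    fun a ha b hb hab => hBsub (g a) (hmem a ha) (hab ▸ hmem b hb), fun j => ?_, ?_⟩
  · rw [filter_fiber_finset_sum hBg]
    exact hBd j
  · calc ((∑ j, B j).map w).sum = ∑ j, ((B j).map w).sum := sum_map_finset_sum w _ B
      _ ≤ ∑ j, 2 * ((A.filter fun a => g a = j).map w).sum := Finset.sum_le_sum fun j _ => hBw j
      _ = 2 * (A.map w).sum := by
        rw [← Finset.mul_sum, ← sum_map_finset_sum, finset_sum_filter_fiber_eq]

end Density

section Packing

variable {α M : Type*} [AddCommMonoid M] [LinearOrder M] [IsOrderedCancelAddMonoid M]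
  {w : α → M} {k : M}

theorem exists_packing_more_than_half_full (hk : 0 ≤ k) {s : Multiset α} (hs : ∀ x ∈ s, w x ≤ k) :
    ∃ (L : List (Multiset α)) (c : Multiset α), L.sum + c = s ∧ (c.map w).sum ≤ k ∧
      ∀ b ∈ L, (b.map w).sum ≤ k ∧ k < 2 • (b.map w).sum := by
  induction s using Multiset.induction_on with
  | empty => exact ⟨[], 0, by simpa using hk⟩
  | cons x s ih =>
    obtain ⟨hx, hs⟩ := Multiset.forall_mem_cons.1 hs
    obtain ⟨L, c, rfl, hc, hL⟩ := ih hs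
    by_cases hfit : w x + (c.map w).sum ≤ k
    · exact ⟨L, x ::ₘ c, Multiset.add_cons x _ c, by simpa using hfit, hL⟩
    by_cases hbig : k < 2 • w x
    · exact ⟨{x} :: L, c, by simp, hc, by simpa using ⟨⟨hx, hbig⟩, hL⟩⟩
    have hcbig : k < 2 • (c.map w).sum := by
      rw [not_le] at hfit
      rw [not_lt, two_nsmul] at hbig
      have hlt : w x < (c.map w).sum := lt_of_add_lt_add_left (hbig.trans_lt hfit)
      rw [two_nsmul]
      exact hfit.trans (add_lt_add_left hlt _)
    refine ⟨c :: L, {x}, ?_, by simpa using hx, List.forall_mem_cons.2 ⟨⟨hc, hcbig⟩, hL⟩⟩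
    rw [List.sum_cons, add_comm c, add_comm, Multiset.singleton_add]

theorem length_nsmul_lt_two_nsmul_sum {L : List (Multiset α)} (hne : L ≠ [])
    (hL : ∀ b ∈ L, k < 2 • (b.map w).sum) :
    L.length • k < 2 • (L.sum.map w).sum := by
  induction L with
  | nil => exact absurd rfl hne
  | cons b L ih =>
    obtain ⟨hb, hL⟩ := List.forall_mem_cons.1 hL
    obtain rfl | hne := eq_or_ne L []
    · simpa using hb
    · rw [List.length_cons, succ_nsmul', List.sum_cons, Multiset.map_add, Multiset.sum_add,
        nsmul_add]
      exact add_lt_add hb (ih hne hL)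

theorem exists_packing_length_le (hk : 0 ≤ k) {s : Multiset α} (hs : ∀ x ∈ s, 0 ≤ w x ∧ w x ≤ k)
    {N : ℕ} (hN : (s.map w).sum ≤ N • k) :
    ∃ L : List (Multiset α), L.length ≤ 1 + 2 * N ∧ L.sum = s ∧ ∀ b ∈ L, (b.map w).sum ≤ k := by
  obtain ⟨L, c, rfl, hc, hL⟩ := exists_packing_more_than_half_full hk fun x hx => (hs x hx).2
  refine ⟨c :: L, ?_, by rw [List.sum_cons, add_comm],
    List.forall_mem_cons.2 ⟨hc, fun b hb => (hL b hb).1⟩⟩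
  by_contra! hlen
  rw [List.length_cons] at hlen
  have hne : L ≠ [] := List.ne_nil_of_length_pos (by omega)
  have hc0 : 0 ≤ (c.map w).sum := Multiset.sum_nonneg <| Multiset.forall_mem_map_iff.2
    fun x hx => (hs x (Multiset.mem_add.2 (Or.inr hx))).1
  refine lt_irrefl (2 • (N • k)) ?_
  calc 2 • (N • k) = (2 * N) • k := (mul_nsmul' k 2 N).symm
    _ ≤ L.length • k := nsmul_le_nsmul_left hk (by omega)
    _ < 2 • (L.sum.map w).sum := length_nsmul_lt_two_nsmul_sum hne fun b hb => (hL b hb).2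
    _ ≤ 2 • ((L.sum + c).map w).sum := by
      rw [Multiset.map_add, Multiset.sum_add]
      exact nsmul_le_nsmul_right (le_add_of_nonneg_right hc0) 2
    _ ≤ 2 • (N • k) := nsmul_le_nsmul_right hN 2

end Packing

theorem validPlacement_iff_sum {n k : ℕ} {d : Fin n → ℕ} {f : Fin n → ℕ → ℕ} {m : ℕ}
    {P : Fin m → Multiset (ℕ × Fin n)} :
    ValidPlacement n k d f m P ↔
      (∀ b ∈ ∑ t, P t, 1 ≤ b.1 ∧ b.1 ≤ k) ∧
      (∀ t, ((P t).map Prod.fst).sum ≤ k) ∧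
      ∀ j, d j ≤ (((∑ t, P t).filter fun b => b.2 = j).map fun b => f j b.1).sum := by
  simp only [ValidPlacement, filter_finset_sum, sum_map_finset_sum, Multiset.mem_sum,
    Finset.mem_univ, true_and, forall_exists_index]
  rw [forall_comm]

theorem stmt_6_general {n k : ℕ} {d : Fin n → ℕ} {f : Fin n → ℕ → ℕ} {m : ℕ}
    {P : Fin m → Multiset (ℕ × Fin n)} (hP : ValidPlacement n k d f m P) :
    ∃ m' : ℕ, m' ≤ 1 + 4 * m ∧
      ∃ Q : Fin m' → Multiset (ℕ × Fin n),
        ValidPlacement n k d f m' Q ∧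
        ∀ j : Fin n, ∃ i : ℕ, ∀ t, ∀ b ∈ Q t, b.2 = j → b.1 = i := by
  obtain ⟨hsize, hcap, hdemand⟩ := validPlacement_iff_sum.1 hP
  have hload : ((∑ t, P t).map Prod.fst).sum ≤ m * k := by
    rw [sum_map_finset_sum]
    simpa using Finset.sum_le_card_nsmul Finset.univ _ k fun t _ => hcap t
  obtain ⟨B, hBP, hBinj, hBd, hBload⟩ :=
    exists_injOn_cover Prod.snd (fun b hb => (hsize b hb).1) hdemand
  obtain ⟨L, hlen, rfl, hLcap⟩ := exists_packing_length_le (N := 2 * m) k.zero_le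
    (fun b hb => ⟨b.1.zero_le, (hsize b (hBP hb)).2⟩) (by rw [smul_eq_mul]; linarith)
  have hsum : ∑ t, L.get t = L.sum := by simp
  refine ⟨L.length, by omega, L.get, validPlacement_iff_sum.2 ⟨?_, ?_, ?_⟩, fun j => ?_⟩
  · exact fun b hb => hsize b (hBP (hsum ▸ hb))
  · exact fun t => hLcap _ (L.get_mem t)
  · exact fun j => hsum ▸ hBd j
  · have : Nonempty (Fin n) := ⟨j⟩
    refine ⟨(Function.invFunOn Prod.snd {b | b ∈ L.sum} j).1, fun t b hb hbj => ?_⟩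
    have hbL : b ∈ L.sum := hsum ▸ Multiset.mem_sum.2 ⟨t, Finset.mem_univ t, hb⟩
    rw [← hbj, hBinj.leftInvOn_invFunOn hbL]

/-- If there is a valid placement of all jobs on `m` machines, then there is a
valid placement on at most `1 + 4m` machines in which every job is executed
only on blocks of a single size. -/
theorem stmt_6 (n k : ℕ) (hk : 1 ≤ k)
    (d : Fin n → ℕ) (hd : ∀ j, 1 ≤ d j)
    (f : Fin n → ℕ → ℕ) (hf : ∀ j, ∀ i ∈ Finset.Icc 1 k, 1 ≤ f j i)
    (m : ℕ) (P : Fin m → Multiset (ℕ × Fin n))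
    (hP : ValidPlacement n k d f m P) :
    ∃ m' : ℕ, m' ≤ 1 + 4 * m ∧
      ∃ Q : Fin m' → Multiset (ℕ × Fin n),
        ValidPlacement n k d f m' Q ∧
        ∀ j : Fin n, ∃ i : ℕ, ∀ t, ∀ b ∈ Q t, b.2 = j → b.1 = i :=
  stmt_6_general hP
end

section
/- Let k ≥ 4 be an even integer. Consider the free-block instance with machine capacity k and k identical jobs, each with demand d = k²/2 + 2k and demand table f given by f(1) = 1, f(i) = i·k for 2 ≤ i ≤ k/2, and f(i) = k²/2 + k + 1 for k/2 + 1 ≤ i ≤ k. Then: (a) there exists a valid placement of all k jobs on (k/2) + 2 machines, in which each job uses one block of size 2 and one block of size k/2; and (b) every valid placement in which each job is executed only on blocks of size (k/2) + 1 uses at least 2k machines. In particular the ratio between the two machine counts, 2k/((k/2)+2), tends to 4 as k → ∞. -/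
/-- The common demand of the `k` identical jobs: `d = k²/2 + 2k`. -/
def tightDemand (k : ℕ) : ℕ := k * k / 2 + 2 * k

/-- The common demand table of the `k` identical jobs: `f 1 = 1`,
`f i = i·k` for `2 ≤ i ≤ k/2`, and `f i = k²/2 + k + 1` for `k/2 + 1 ≤ i ≤ k`. -/
def tightTable (k : ℕ) : ℕ → ℕ := fun i =>
  if i = 1 then 1 else if i ≤ k / 2 then i * k else k * k / 2 + k + 1

/-!
A block size larger than half a machine occurs at most once per machine. So a size whose value falls
short of the demand, such as `k / 2 + 1`, costs every job two whole machines, even though it is the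
densest. Mixing sizes `2` and `k / 2` meets the demand exactly, and both sizes pack without waste:
`k / 2` machines hold two blocks of size `k / 2` each, and two machines hold `k / 2` blocks of
size `2` each.
-/

open Finset

lemma exists_card_fiber_le {α β : Type*} [Fintype α] [Fintype β] [DecidableEq β] {c : ℕ}
    (h : Fintype.card α ≤ Fintype.card β * c) : ∃ a : α → β, ∀ y, #{x | a x = y} ≤ c := by
  obtain ⟨e⟩ : Nonempty (α ↪ β × Fin c) :=
    Function.Embedding.nonempty_of_card_le (by simpa using h)
  refine ⟨fun x => (e x).1, fun y => ?_⟩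
  have snd_injOn : Set.InjOn (fun x => (e x).2) ({x | (e x).1 = y} : Finset α) := by
    intro x hx x' hx' h
    simp only [coe_filter_univ, Set.mem_ofPred_eq] at hx hx'
    exact e.injective (Prod.ext (hx.trans hx'.symm) h)
  simpa using card_le_card_of_injOn _ (fun x _ => mem_univ (e x).2) snd_injOn

section UniformPlacement

variable {J M : Type*} [Fintype J] [DecidableEq M]

/-- The placement giving each job `j` a single block, of size `s`, on machine `a j`. -/
def uniformPlacement (s : ℕ) (a : J → M) (t : M) : Multiset (ℕ × J) :=
  ({j | a j = t} : Finset J).val.map (fun j => (s, j))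

lemma mem_uniformPlacement {s : ℕ} {a : J → M} {t : M} {b : ℕ × J} :
    b ∈ uniformPlacement s a t ↔ b.1 = s ∧ a b.2 = t := by
  simp only [uniformPlacement, Multiset.mem_map, mem_val, mem_filter_univ, Prod.ext_iff]
  grind

lemma sum_sizes_uniformPlacement (s : ℕ) (a : J → M) (t : M) :
    ((uniformPlacement s a t).map Prod.fst).sum = #{j | a j = t} * s := by
  simp [uniformPlacement, card_def]

end UniformPlacement

section JobBlocks

variable {J M : Type*} [DecidableEq J] [Fintype M]

/-- The blocks `(size, job)` that the placement `P` assigns to job `j`, over all machines. -/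
def jobBlocks (P : M → Multiset (ℕ × J)) (j : J) : Multiset (ℕ × J) :=
  ∑ t, (P t).filter (fun b => b.2 = j)

lemma mem_jobBlocks {P : M → Multiset (ℕ × J)} {j : J} {b : ℕ × J} :
    b ∈ jobBlocks P j ↔ ∃ t, b ∈ P t ∧ b.2 = j := by
  simp [jobBlocks, Multiset.mem_sum]

lemma sum_map_jobBlocks (P : M → Multiset (ℕ × J)) (j : J) (g : ℕ × J → ℕ) :
    ((jobBlocks P j).map g).sum = ∑ t, (((P t).filter (fun b => b.2 = j)).map g).sum := by
  rw [jobBlocks, ← Multiset.coe_mapAddMonoidHom, map_sum, ← Multiset.coe_sumAddMonoidHom, map_sum]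

lemma sum_card_jobBlocks [Fintype J] (P : M → Multiset (ℕ × J)) :
    ∑ j, (jobBlocks P j).card = ∑ t, (P t).card := by
  have card_eq_sum_filter (t : M) :
      ∑ j, ((P t).filter (fun b => b.2 = j)).card = (P t).card := by
    simpa [Multiset.count_map, eq_comm] using
      Multiset.sum_count_eq_card (s := univ) (m := (P t).map Prod.snd) (by simp)
  simp only [jobBlocks, Multiset.card_sum]
  rw [sum_comm]
  simp only [card_eq_sum_filter]

lemma jobBlocks_finAppend {m m' : ℕ} (P : Fin m → Multiset (ℕ × J))
    (Q : Fin m' → Multiset (ℕ × J)) (j : J) :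
    jobBlocks (Fin.append P Q) j = jobBlocks P j + jobBlocks Q j := by
  simp [jobBlocks, Fin.sum_univ_add]

lemma jobBlocks_uniformPlacement [Fintype J] [DecidableEq M] (s : ℕ) (a : J → M) (j : J) :
    jobBlocks (uniformPlacement s a) j = {(s, j)} := by
  have filter_eq (t : M) : (uniformPlacement s a t).filter (fun b => b.2 = j) =
      if a j = t then {(s, j)} else 0 := by
    rw [uniformPlacement, Multiset.filter_map]
    simp only [Function.comp_def, Multiset.filter_eq', Multiset.count_eq_of_nodup (nodup _),
      mem_val, mem_filter_univ]
    split_ifs <;> simp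
  simp only [jobBlocks, filter_eq, sum_ite_eq, mem_univ, if_true]

end JobBlocks

namespace ValidPlacement

variable {n k m : ℕ} {d : Fin n → ℕ} {f : Fin n → ℕ → ℕ} {P : Fin m → Multiset (ℕ × Fin n)}

lemma demand_le_sum_jobBlocks (hP : ValidPlacement n k d f m P) (j : Fin n) :
    d j ≤ ((jobBlocks P j).map (fun b => f j b.1)).sum := by
  rw [sum_map_jobBlocks]
  exact hP.2.2 j

lemma finAppend {m' : ℕ} {e : Fin n → ℕ} {Q : Fin m' → Multiset (ℕ × Fin n)}
    (hP : ValidPlacement n k d f m P) (hQ : ValidPlacement n k e f m' Q) :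
    ValidPlacement n k (d + e) f (m + m') (Fin.append P Q) := by
  refine ⟨?_, ?_, fun j => ?_⟩
  · simpa [Fin.forall_fin_add] using And.intro hP.1 hQ.1
  · simpa [Fin.forall_fin_add] using And.intro hP.2.1 hQ.2.1
  · simpa [Fin.sum_univ_add] using Nat.add_le_add (hP.2.2 j) (hQ.2.2 j)

lemma card_le_div_of_size_eq {s : ℕ} (hP : ValidPlacement n k d f m P) {t : Fin m}
    (hs : ∀ b ∈ P t, b.1 = s) : (P t).card ≤ k / s := by
  rcases (P t).empty_or_exists_mem with hempty | ⟨b, hb⟩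
  · simp [hempty]
  · have s_pos : 0 < s := hs b hb ▸ (hP.1 t b hb).1
    have load_eq : ((P t).map Prod.fst).sum = (P t).card * s := by
      rw [Multiset.map_congr rfl hs, Multiset.map_const', Multiset.sum_replicate, smul_eq_mul]
    exact (Nat.le_div_iff_mul_le s_pos).2 (load_eq ▸ hP.2.1 t)

lemma ceilDiv_le_card_jobBlocks {s : ℕ} (hP : ValidPlacement n k d f m P)
    {j : Fin n} (hs : ∀ b ∈ jobBlocks P j, b.1 = s) :
    d j ⌈/⌉ f j s ≤ (jobBlocks P j).card := by
  rcases (f j s).eq_zero_or_pos with hzero | hpos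
  · simp [hzero]
  · have value_eq : ((jobBlocks P j).map (fun b => f j b.1)).sum =
        (jobBlocks P j).card * f j s := by
      rw [Multiset.map_congr rfl fun b hb => by rw [hs b hb], Multiset.map_const',
        Multiset.sum_replicate, smul_eq_mul]
    rw [ceilDiv_le_iff_le_mul hpos, mul_comm, ← value_eq]
    exact hP.demand_le_sum_jobBlocks j

/-- A job with `f j s = 0` contributes nothing to the left-hand side, because `a ⌈/⌉ 0 = 0`. -/
theorem sum_ceilDiv_le {s : ℕ} (hP : ValidPlacement n k d f m P)
    (hs : ∀ t, ∀ b ∈ P t, b.1 = s) : ∑ j, d j ⌈/⌉ f j s ≤ m * (k / s) := by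
  have size_of_mem_jobBlocks (j : Fin n) : ∀ b ∈ jobBlocks P j, b.1 = s := fun b hb =>
    let ⟨t, ht, _⟩ := mem_jobBlocks.1 hb
    hs t b ht
  calc ∑ j, d j ⌈/⌉ f j s
      ≤ ∑ j, (jobBlocks P j).card :=
        sum_le_sum fun j _ => hP.ceilDiv_le_card_jobBlocks (size_of_mem_jobBlocks j)
    _ = ∑ t, (P t).card := sum_card_jobBlocks P
    _ ≤ ∑ _t : Fin m, k / s := sum_le_sum fun t _ => hP.card_le_div_of_size_eq (hs t)
    _ = m * (k / s) := by simp

end ValidPlacement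

theorem exists_validPlacement_jobBlocks_eq_singleton {n k m s : ℕ} (f : Fin n → ℕ → ℕ)
    (h : n ≤ m * (k / s)) :
    ∃ P : Fin m → Multiset (ℕ × Fin n),
      ValidPlacement n k (fun j => f j s) f m P ∧ ∀ j, jobBlocks P j = {(s, j)} := by
  obtain ⟨a, ha⟩ := exists_card_fiber_le (α := Fin n) (β := Fin m) (by simpa using h)
  refine ⟨uniformPlacement s a, ⟨fun t b hb => ?_, fun t => ?_, fun j => ?_⟩,
    jobBlocks_uniformPlacement s a⟩
  · rw [(mem_uniformPlacement.1 hb).1]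
    -- `k / s` is `0` for `s = 0` as well as for `s > k`, so `h` excludes both once a job exists.
    have div_pos : 0 < k / s := Nat.pos_of_mul_pos_left (b.2.pos.trans_le h)
    exact Nat.div_pos_iff.1 div_pos
  · rw [sum_sizes_uniformPlacement]
    exact (Nat.mul_le_mul_right s (ha t)).trans (Nat.div_mul_le_self k s)
  · rw [← sum_map_jobBlocks _ _ (fun b => f j b.1), jobBlocks_uniformPlacement]
    simp

lemma tightDemand_eq_tightTable_half_add_tightTable_two {k : ℕ} (hk : 4 ≤ k) (hke : Even k) :
    tightDemand k = tightTable k (k / 2) + tightTable k 2 := by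
  have table_two : tightTable k 2 = 2 * k := by
    rw [tightTable, if_neg (by lia), if_pos (by lia)]
  have table_half : tightTable k (k / 2) = k / 2 * k := by
    rw [tightTable, if_neg (by lia), if_pos le_rfl]
  rw [tightDemand, table_two, table_half, Nat.mul_div_right_comm hke.two_dvd]

lemma two_le_tightDemand_ceilDiv_tightTable {k : ℕ} (hk : 2 ≤ k) :
    2 ≤ tightDemand k ⌈/⌉ tightTable k (k / 2 + 1) := by
  have table_eq : tightTable k (k / 2 + 1) = k * k / 2 + k + 1 := by
    rw [tightTable, if_neg (by lia), if_neg (by lia)]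
  have table_lt_demand : tightTable k (k / 2 + 1) < tightDemand k := by
    rw [table_eq, tightDemand]
    lia
  rwa [Nat.succ_le_iff, ← not_le, ceilDiv_le_iff_le_mul (by lia), mul_one, not_le]

lemma tendsto_two_mul_div_half_add_two :
    Filter.Tendsto (fun k : ℕ => (2 * (k : ℝ)) / ((k : ℝ) / 2 + 2))
      Filter.atTop (nhds 4) := by
  have h := (tendsto_natCast_div_add_atTop (4 : ℝ)).const_mul 4
  rw [mul_one] at h
  refine h.congr fun n => ?_
  field_simp
  ring

/-- For even `k ≥ 4` and the instance with `k` identical jobs of demand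
`k²/2 + 2k` and table `tightTable k`:
(a) there is a valid placement on `(k/2) + 2` machines in which each job uses
exactly one block of size `2` and one block of size `k/2`;
(b) every valid placement in which each job is executed only on blocks of size
`(k/2) + 1` uses at least `2k` machines;
and the ratio `2k / ((k/2) + 2)` tends to `4` as `k → ∞`. -/
theorem stmt_8 (k : ℕ) (hk : 4 ≤ k) (hke : Even k) :
    (∃ P : Fin (k / 2 + 2) → Multiset (ℕ × Fin k),
      ValidPlacement k k (fun _ => tightDemand k) (fun _ => tightTable k)
        (k / 2 + 2) P ∧
      ∀ j : Fin k,
        (∑ t, (P t).filter (fun b => b.2 = j)) =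
          ({(2, j), (k / 2, j)} : Multiset (ℕ × Fin k))) ∧
    (∀ (m : ℕ) (P : Fin m → Multiset (ℕ × Fin k)),
      ValidPlacement k k (fun _ => tightDemand k) (fun _ => tightTable k) m P →
      (∀ t, ∀ b ∈ P t, b.1 = k / 2 + 1) →
      2 * k ≤ m) ∧
    Filter.Tendsto (fun k : ℕ => (2 * (k : ℝ)) / ((k : ℝ) / 2 + 2))
      Filter.atTop (nhds 4) := by
  refine ⟨?_, fun m P hP hsize => ?_, tendsto_two_mul_div_half_add_two⟩
  · have half_fits : k ≤ k / 2 * (k / (k / 2)) := by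
      rw [Nat.div_div_self hke.two_dvd (by lia), Nat.div_mul_cancel hke.two_dvd]
    have two_fits : k ≤ 2 * (k / 2) := (Nat.mul_div_cancel' hke.two_dvd).ge
    obtain ⟨P, hP, hPj⟩ :=
      exists_validPlacement_jobBlocks_eq_singleton (fun _ => tightTable k) half_fits
    obtain ⟨Q, hQ, hQj⟩ :=
      exists_validPlacement_jobBlocks_eq_singleton (fun _ => tightTable k) two_fits
    refine ⟨Fin.append P Q, ?_, fun j => ?_⟩
    · rw [tightDemand_eq_tightTable_half_add_tightTable_two hk hke]
      exact hP.finAppend hQ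
    · rw [← jobBlocks, jobBlocks_finAppend, hPj, hQj, add_comm]
      rfl
  · have one_block : k / (k / 2 + 1) = 1 := Nat.div_eq_of_lt_le (by lia) (by lia)
    calc 2 * k = ∑ _j : Fin k, 2 := by simp [mul_comm]
      _ ≤ ∑ _j : Fin k, tightDemand k ⌈/⌉ tightTable k (k / 2 + 1) :=
        sum_le_sum fun _ _ => two_le_tightDemand_ceilDiv_tightTable (by lia)
      _ ≤ m * (k / (k / 2 + 1)) := hP.sum_ceilDiv_le hsize
      _ = m := by rw [one_block, mul_one]
end

section
/- Let q ≥ 3 be an integer and let a, b, c be integers with 1 ≤ a, b, c ≤ q. Then the nonnegative integer N = (q^{3q} + q^{2q} + q^q) − (q^{2q+c} + q^{q+b} + q^a) is either equal to 0 or is not a power of q, i.e., N ≠ q^e for every natural number e. -/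
/-!
If `N = q ^ e`, then `q` is a root of the integer polynomial `P` obtained by replacing `q` with an
indeterminate in the powers making up `N - q ^ e`. Three powers occur with a positive sign and four
with a negative one, so `P(1) = -1`. Hence `q - 1` divides `P(q) - P(1) = 1`, impossible for
`q ≥ 3`.
-/

section CommRing

open Polynomial

variable {R : Type*} [CommRing R] {x y : R}

theorem isUnit_sub_of_isRoot_of_isUnit_eval {p : R[X]} (hx : p.IsRoot x)
    (hy : IsUnit (p.eval y)) : IsUnit (x - y) := by
  have hdvd : x - y ∣ p.eval x - p.eval y := sub_dvd_eval_sub x y p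
  rw [hx.eq_zero, zero_sub, dvd_neg] at hdvd
  exact isUnit_of_dvd_unit hdvd hy

theorem stmt_10_general (hx : ¬IsUnit (x - 1)) {ι : Type*} (s : Finset ι) (f g : ι → ℕ) (e : ℕ) :
    ∑ i ∈ s, x ^ f i - ∑ i ∈ s, x ^ g i ≠ x ^ e := by
  intro h
  let p : R[X] := ∑ i ∈ s, X ^ f i - ∑ i ∈ s, X ^ g i - X ^ e
  have hroot : p.IsRoot x := by simp [p, eval_finsetSum, h]
  have heval : p.eval 1 = -1 := by simp [p, eval_finsetSum]
  exact hx (isUnit_sub_of_isRoot_of_isUnit_eval hroot (heval ▸ isUnit_one.neg))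

end CommRing

/-- For `q ≥ 3` and `1 ≤ a, b, c ≤ q`, the number
`N = (q^{3q} + q^{2q} + q^q) − (q^{2q+c} + q^{q+b} + q^a)` is either `0`
or not a power of `q`. -/
theorem stmt_10 (q : ℕ) (hq : 3 ≤ q) (a b c : ℕ)
    (ha : 1 ≤ a) (ha' : a ≤ q) (hb : 1 ≤ b) (hb' : b ≤ q)
    (hc : 1 ≤ c) (hc' : c ≤ q) :
    (q ^ (3 * q) + q ^ (2 * q) + q ^ q)
        - (q ^ (2 * q + c) + q ^ (q + b) + q ^ a) = 0 ∨
    ∀ e : ℕ, (q ^ (3 * q) + q ^ (2 * q) + q ^ q)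
        - (q ^ (2 * q + c) + q ^ (q + b) + q ^ a) ≠ q ^ e := by
  have hunit : ¬IsUnit ((q : ℤ) - 1) := by rw [Int.isUnit_iff]; omega
  refine Or.inr fun e h ↦
    stmt_10_general hunit Finset.univ ![3 * q, 2 * q, q] ![2 * q + c, q + b, a] e ?_
  -- Positivity rules out that the natural subtraction in `h` is truncated.
  have hpos : 0 < q ^ e := by positivity
  simp only [Fin.sum_univ_three, Matrix.cons_val, sub_eq_iff_eq_add]
  norm_cast
  omega
end

section
/- Consider the free-block placement model where each job j has integer demand d_j ≥ 1 and demand table f_j : {0,1,…,k} → ℕ that is nondecreasing, satisfies f_j(0) = 0 and f_j(1) ≥ 1, and has marginally decreasing gains: f_j(p+1) − f_j(p) ≤ f_j(p) − f_j(p−1) for all 1 ≤ p ≤ k−1. Then the minimum number of machines over all valid placements of the n jobs equals ⌈(Σ_{j=1}^n ⌈d_j / f_j(1)⌉) / k⌉; in particular, assigning each job j exactly ⌈d_j / f_j(1)⌉ blocks of size 1 and packing these unit blocks arbitrarily into machines of capacity k is optimal. -/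
/-!
Granting `c` processors to a job whose table satisfies `f p ≤ p * f 1` yields at most `c * f 1`,
however they are cut into blocks, so job `j` needs `⌈d j / f j 1⌉` processors in every valid
placement, while each machine only has `k`. Blocks of size `1` attain this bound for every job
at once, and unit blocks fill machines without waste. Marginally decreasing gains give
`f p ≤ p * f 1`, since each of the `p` gains summing to `f p` is at most the first one.
-/

section MarginallyDecreasing

variable {α : Type*} [AddCommMonoid α] [PartialOrder α] [IsOrderedAddMonoid α] [Sub α]
  [OrderedSub α] {g : ℕ → α} {k : ℕ}

theorem le_add_nsmul_of_succ_sub_le {c : α} (hgain : ∀ p < k, g (p + 1) - g p ≤ c)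
    {p : ℕ} (hp : p ≤ k) : g p ≤ g 0 + p • c := by
  induction p with
  | zero => simp
  | succ p ih =>
    calc g (p + 1) ≤ c + g p := tsub_le_iff_right.mp (hgain p hp)
      _ ≤ c + (g 0 + p • c) := by gcongr; exact ih (by omega)
      _ = g 0 + (p + 1) • c := by rw [succ_nsmul, add_left_comm, add_comm c]

theorem le_add_nsmul_of_marginally_decreasing
    (hconcave : ∀ p, 1 ≤ p → p + 1 ≤ k → g (p + 1) - g p ≤ g p - g (p - 1))
    {p : ℕ} (hp : p ≤ k) : g p ≤ g 0 + p • (g 1 - g 0) := by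
  refine le_add_nsmul_of_succ_sub_le (fun q hq => ?_) hp
  induction q with
  | zero => exact le_rfl
  | succ q ih => exact (hconcave (q + 1) (by omega) hq).trans (ih (by omega))

end MarginallyDecreasing

section Packing

variable {α ι : Type*}

theorem exists_sum_eq_of_card_le_sum (T : Finset ι) (c : ι → ℕ) {s : Multiset α}
    (hs : s.card ≤ ∑ i ∈ T, c i) :
    ∃ P : ι → Multiset α, (∀ i, (P i).card ≤ c i) ∧ ∑ i ∈ T, P i = s := by
  classical
  induction T using Finset.induction generalizing s with
  | empty =>
    have hs_zero : s = 0 := by simpa using hs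
    exact ⟨0, by simp [hs_zero]⟩
  | insert i T hi ih =>
    induction s using Quotient.inductionOn with | _ l
    have hdrop : (l.drop (c i) : Multiset α).card ≤ ∑ j ∈ T, c j := by
      simpa [Finset.sum_insert hi, add_comm] using hs
    obtain ⟨P, hcap, hsum⟩ := ih hdrop
    refine ⟨Function.update P i (l.take (c i)), fun j => ?_, ?_⟩
    · obtain rfl | hj := eq_or_ne j i
      · simp
      · simpa [hj] using hcap j
    · simp [Finset.sum_insert hi, Finset.sum_update_of_notMem hi, hsum]

theorem exists_sum_count_eq_of_sum_le_sum {μ : Type*} [Fintype ι] [DecidableEq ι] [Fintype μ]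
    (c : μ → ℕ) (r : ι → ℕ) (hr : ∑ j, r j ≤ ∑ t, c t) :
    ∃ Q : μ → Multiset ι, (∀ t, (Q t).card ≤ c t) ∧ ∀ j, ∑ t, (Q t).count j = r j := by
  obtain ⟨Q, hcap, hsum⟩ := exists_sum_eq_of_card_le_sum Finset.univ c
    (s := ∑ j, Multiset.replicate (r j) j) (by simpa using hr)
  refine ⟨Q, hcap, fun j => ?_⟩
  rw [← Multiset.count_sum', hsum]
  simp [Multiset.count_sum', Multiset.count_replicate]

theorem sum_filter_eq_self [Fintype ι] [DecidableEq ι] (g : α → ι) (s : Multiset α) :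
    ∑ i, s.filter (g · = i) = s := by
  classical
  ext a
  simp [Multiset.count_sum', Multiset.count_filter]

end Packing

section JobProcessors

variable {ι μ : Type*} [DecidableEq ι] [Fintype μ]

/-- The number of processors granted to job `j` by the placement `P`: the total size of the
blocks of `j` over all machines. -/
def jobProcessors (P : μ → Multiset (ℕ × ι)) (j : ι) : ℕ :=
  ∑ t, (((P t).filter (·.2 = j)).map Prod.fst).sum

theorem sum_jobProcessors [Fintype ι] (P : μ → Multiset (ℕ × ι)) :
    ∑ j, jobProcessors P j = ∑ t, ((P t).map Prod.fst).sum := by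
  unfold jobProcessors
  rw [Finset.sum_comm]
  refine Finset.sum_congr rfl fun t _ => ?_
  conv_rhs => rw [← sum_filter_eq_self Prod.snd (P t)]
  simp only [← Multiset.coe_mapAddMonoidHom, ← Multiset.coe_sumAddMonoidHom, map_sum]

end JobProcessors

section Placement

variable {n k m : ℕ} {d : Fin n → ℕ} {f : Fin n → ℕ → ℕ}

theorem ValidPlacement.sum_jobProcessors_le {P : Fin m → Multiset (ℕ × Fin n)}
    (hP : ValidPlacement n k d f m P) : ∑ j, jobProcessors P j ≤ k * m :=
  calc ∑ j, jobProcessors P j = ∑ t, ((P t).map Prod.fst).sum := sum_jobProcessors P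
    _ ≤ ∑ _t : Fin m, k := Finset.sum_le_sum fun t _ => hP.2.1 t
    _ = k * m := by simp [mul_comm]

theorem ValidPlacement.ceilDiv_le_jobProcessors {P : Fin m → Multiset (ℕ × Fin n)}
    (hP : ValidPlacement n k d f m P) {j : Fin n} {c : ℕ} (hc : 0 < c)
    (hf : ∀ p, 1 ≤ p → p ≤ k → f j p ≤ p * c) : d j ⌈/⌉ c ≤ jobProcessors P j := by
  obtain ⟨hsize, -, hdemand⟩ := hP
  rw [ceilDiv_le_iff_le_mul hc]
  calc d j ≤ ∑ t, (((P t).filter (·.2 = j)).map (fun b => f j b.1)).sum := hdemand j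
    _ ≤ ∑ t, (((P t).filter (·.2 = j)).map (fun b => c * b.1)).sum := by
        gcongr with t _
        refine Multiset.sum_map_le_sum_map _ _ fun b hb => ?_
        obtain ⟨hpos, hle⟩ := hsize t b (Multiset.mem_of_mem_filter hb)
        exact (hf b.1 hpos hle).trans_eq (mul_comm _ _)
    _ = c * jobProcessors P j := by
        simp only [jobProcessors, Multiset.sum_map_mul_left, Finset.mul_sum]

/-- The placement using only blocks of size `1`, in which machine `t` hosts one such block for
each occurrence of a job in `Q t`. -/
def unitBlockPlacement (Q : Fin m → Multiset (Fin n)) : Fin m → Multiset (ℕ × Fin n) :=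
  fun t => (Q t).map (Prod.mk 1)

theorem validPlacement_unitBlockPlacement_iff (hone : ∀ j, 0 < f j 1)
    {Q : Fin m → Multiset (Fin n)} :
    ValidPlacement n k d f m (unitBlockPlacement Q) ↔
      (∀ t, (Q t).card ≤ k) ∧ ∀ j, d j ⌈/⌉ f j 1 ≤ ∑ t, (Q t).count j := by
  have hcard (t : Fin m) : ((unitBlockPlacement Q t).map Prod.fst).sum = (Q t).card := by
    simp [unitBlockPlacement]
  have hgain (j : Fin n) (t : Fin m) :
      (((unitBlockPlacement Q t).filter (·.2 = j)).map (fun b => f j b.1)).sum =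
        f j 1 * (Q t).count j := by
    simp [unitBlockPlacement, Multiset.filter_map, Multiset.filter_eq', mul_comm]
  simp only [ValidPlacement, hcard, hgain, ← Finset.mul_sum, ← ceilDiv_le_iff_le_mul (hone _)]
  refine and_iff_right_of_imp fun ⟨hcap, _⟩ t b hb => ?_
  obtain ⟨j, hj, rfl⟩ := Multiset.mem_map.mp hb
  exact ⟨le_rfl, (Multiset.card_pos_iff_exists_mem.mpr ⟨j, hj⟩).trans_le (hcap t)⟩

end Placement

theorem stmt_14_general (n k : ℕ) (hk : 1 ≤ k) (d : Fin n → ℕ) (f : Fin n → ℕ → ℕ)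
    (hone : ∀ j, 1 ≤ f j 1)
    (hdensity : ∀ j, ∀ p, 1 ≤ p → p ≤ k → f j p ≤ p * f j 1) :
    IsLeast {m : ℕ | ∃ P : Fin m → Multiset (ℕ × Fin n),
        ValidPlacement n k d f m P}
      ((∑ j, d j ⌈/⌉ f j 1) ⌈/⌉ k) := by
  constructor
  · set M := (∑ j, d j ⌈/⌉ f j 1) ⌈/⌉ k
    have hroom : ∑ j, d j ⌈/⌉ f j 1 ≤ ∑ _t : Fin M, k := by
      simpa [mul_comm k] using (ceilDiv_le_iff_le_mul hk).mp (le_refl M)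
    obtain ⟨Q, hcap, hcount⟩ := exists_sum_count_eq_of_sum_le_sum _ _ hroom
    exact ⟨unitBlockPlacement Q,
      (validPlacement_unitBlockPlacement_iff hone).mpr ⟨hcap, fun j => (hcount j).ge⟩⟩
  · rintro m ⟨P, hP⟩
    rw [ceilDiv_le_iff_le_mul hk]
    calc ∑ j, d j ⌈/⌉ f j 1
        ≤ ∑ j, jobProcessors P j :=
          Finset.sum_le_sum fun j _ => hP.ceilDiv_le_jobProcessors (hone j) (hdensity j)
      _ ≤ k * m := hP.sum_jobProcessors_le

/-- For marginally decreasing (concave), nondecreasing demand tables with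
`f j 0 = 0` and `f j 1 ≥ 1`, the minimum number of machines over all valid
placements equals `⌈(Σ_j ⌈d_j / f_j(1)⌉) / k⌉`; in particular giving each job
`j` exactly `⌈d_j / f_j(1)⌉` unit blocks and packing them is optimal. -/
theorem stmt_14 (n k : ℕ) (hk : 1 ≤ k)
    (d : Fin n → ℕ) (hd : ∀ j, 1 ≤ d j)
    (f : Fin n → ℕ → ℕ)
    (hmono : ∀ j, ∀ p q_, p ≤ q_ → q_ ≤ k → f j p ≤ f j q_)
    (hzero : ∀ j, f j 0 = 0)
    (hone : ∀ j, 1 ≤ f j 1)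
    (hconcave : ∀ j, ∀ p, 1 ≤ p → p + 1 ≤ k →
      f j (p + 1) - f j p ≤ f j p - f j (p - 1)) :
    IsLeast {m : ℕ | ∃ P : Fin m → Multiset (ℕ × Fin n),
        ValidPlacement n k d f m P}
      ((∑ j, d j ⌈/⌉ f j 1) ⌈/⌉ k) := by
  refine stmt_14_general n k hk d f hone fun j p _ hp => ?_
  simpa [hzero j] using le_add_nsmul_of_marginally_decreasing (hconcave j) hp
end
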